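/- arXiv:1712.02454 — 2 statements merged into one kernel-verified Lean document; each statement's English description precedes it below -/
import Mathlib

section
/- For each natural number d, let m_d denote the number of hives h for GL(3) with h_{44} = d. Then the generating function identity (Σ_{d ≥ 0} m_d t^d) · (1−t)^2 (1−t^2)^3 (1−t^3)^4 (1−t^4) = 1 − t^6 holds in the ring of formal power series Z[[t]]. In particular m_0 = 1, m_1 = 2, m_2 = 6, m_3 = 14, m_4 = 29, m_5 = 56, m_6 = 105, m_7 = 182, m_8 = 308, m_9 = 502. -/
/-- A hive for `GL(3)`, written as a tuple
`(h₁₁, h₂₁, h₂₂, h₃₁, h₃₂, h₃₃, h₄₁, h₄₂, h₄₃, h₄₄)` (indices `0,...,9`):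
`h₁₁ = 0`, the rhombus conditions hold, and the three boundary sequences are
non-negative dominant. -/
def IsHive3 (h : Fin 10 → ℤ) : Prop :=
  h 0 = 0 ∧
  -- rhombus conditions of the first type
  h 3 + h 2 ≤ h 1 + h 4 ∧
  h 6 + h 4 ≤ h 3 + h 7 ∧
  h 7 + h 5 ≤ h 4 + h 8 ∧
  -- rhombus conditions of the second type
  h 4 + h 0 ≤ h 1 + h 2 ∧
  h 7 + h 1 ≤ h 3 + h 4 ∧
  h 8 + h 2 ≤ h 4 + h 5 ∧
  -- rhombus conditions of the third type
  h 5 + h 1 ≤ h 4 + h 2 ∧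
  h 8 + h 3 ≤ h 7 + h 4 ∧
  h 9 + h 4 ≤ h 8 + h 5 ∧
  -- boundary sequence a: (h₂₂ - h₁₁, h₃₃ - h₂₂, h₄₄ - h₃₃)
  h 5 - h 2 ≤ h 2 - h 0 ∧ h 9 - h 5 ≤ h 5 - h 2 ∧ 0 ≤ h 9 - h 5 ∧
  -- boundary sequence b: (h₂₁ - h₁₁, h₃₁ - h₂₁, h₄₁ - h₃₁)
  h 3 - h 1 ≤ h 1 - h 0 ∧ h 6 - h 3 ≤ h 3 - h 1 ∧ 0 ≤ h 6 - h 3 ∧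
  -- boundary sequence c: (h₄₂ - h₄₁, h₄₃ - h₄₂, h₄₄ - h₄₃)
  h 8 - h 7 ≤ h 7 - h 6 ∧ h 9 - h 8 ≤ h 8 - h 7 ∧ 0 ≤ h 9 - h 8

/-- `hiveCount3 d` is the number of hives for `GL(3)` with top entry `h₄₄ = d`. -/
noncomputable def hiveCount3 (d : ℕ) : ℕ :=
  Set.ncard {h : Fin 10 → ℤ | IsHive3 h ∧ h 9 = (d : ℤ)}

/-- Solutions of a weighted sum equation. -/
def wSet {k : ℕ} (w : Fin k → ℕ) (d : ℕ) : Set (Fin k → ℕ) := {n | ∑ i, w i * n i = d}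

lemma wSet_finite {k : ℕ} (w : Fin k → ℕ) (hw : ∀ i, 0 < w i) (d : ℕ) : (wSet w d).Finite := by
  apply (Set.finite_Iic (fun _ : Fin k => d)).subset
  intro n hn i
  have h1 : w i * n i ≤ ∑ i, w i * n i :=
    Finset.single_le_sum (f := fun i => w i * n i) (fun _ _ => Nat.zero_le _) (Finset.mem_univ i)
  have h2 : ∑ i, w i * n i = d := hn
  have := hw i
  show n i ≤ d
  nlinarith

/-- Splitting off the solutions which are not in the image of a shift. -/
lemma mk_mul_one_sub {α : Type*} (S T : ℕ → Set α) (hS : ∀ d, (S d).Finite) (w : ℕ)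
    (f : α → α) (hf : Function.Injective f)
    (hT : ∀ d, T d ⊆ S d)
    (hmaps : ∀ d, ∀ x ∈ S d, f x ∈ S (d + w) ∧ f x ∉ T (d + w))
    (hsurj : ∀ d, ∀ y ∈ S d, y ∉ T d → w ≤ d ∧ ∃ x ∈ S (d - w), f x = y) :
    (PowerSeries.mk fun d => ((S d).ncard : ℤ)) * (1 - PowerSeries.X ^ w) =
      PowerSeries.mk fun d => ((T d).ncard : ℤ) := by
  ext d
  rw [mul_sub, mul_one, map_sub, PowerSeries.coeff_mul_X_pow']
  simp only [PowerSeries.coeff_mk]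
  have hd := Set.ncard_sdiff_add_ncard_of_subset (hT d) (hS d)
  split_ifs with h
  · have : S d \ T d = f '' S (d - w) := by
      ext y
      constructor
      · rintro ⟨h1, h2⟩
        obtain ⟨_, x, hx, rfl⟩ := hsurj d y h1 h2
        exact ⟨x, hx, rfl⟩
      · rintro ⟨x, hx, rfl⟩
        have := hmaps _ x hx
        rw [Nat.sub_add_cancel h] at this
        exact this
    rw [this, Set.ncard_image_of_injective _ hf] at hd
    omega
  · have : S d \ T d = ∅ := by
      ext y
      simp only [Set.mem_sdiff, Set.mem_empty_iff_false, iff_false]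
      rintro ⟨h1, h2⟩
      exact h (hsurj d y h1 h2).1
    rw [this, Set.ncard_empty] at hd
    omega

lemma wSet_gf : ∀ {k : ℕ} (w : Fin k → ℕ) (_ : ∀ i, 0 < w i),
    (PowerSeries.mk fun d => ((wSet w d).ncard : ℤ)) * ∏ i, (1 - PowerSeries.X ^ w i) = 1 := by
  intro k
  induction k with
  | zero =>
    intro w _
    ext d
    rw [Finset.univ_eq_empty, Finset.prod_empty, mul_one, PowerSeries.coeff_mk,
      PowerSeries.coeff_one]
    split_ifs with h
    · have : wSet w d = {fun _ => 0} := by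
        ext n
        simp only [wSet, Finset.univ_eq_empty, Finset.sum_empty, Set.mem_ofPred_eq,
          Set.mem_singleton_iff]
        exact ⟨fun _ => Subsingleton.elim _ _, fun _ => h.symm⟩
      rw [this, Set.ncard_singleton]; rfl
    · have : wSet w d = ∅ := by
        ext n
        simp only [wSet, Finset.univ_eq_empty, Finset.sum_empty, Set.mem_ofPred_eq,
          Set.mem_empty_iff_false, iff_false]
        exact fun h' => h h'.symm
      rw [this, Set.ncard_empty]; rfl
  | succ k ih =>
    intro w hw
    rw [Fin.prod_univ_succ, ← mul_assoc]
    rw [mk_mul_one_sub (wSet w) (fun d => {n | n ∈ wSet w d ∧ n 0 = 0}) (wSet_finite w hw) (w 0)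
      (fun n => Fin.cons (n 0 + 1) (fun i => n i.succ))]
    · refine Eq.trans ?_ (ih (fun i => w i.succ) (fun i => hw _))
      congr 2
      ext d
      congr 1
      have : {n | n ∈ wSet w d ∧ n 0 = 0} =
          (fun n : Fin k → ℕ => (Fin.cons 0 n : Fin (k + 1) → ℕ)) ''
            wSet (fun i => w i.succ) d := by
        ext n
        constructor
        · rintro ⟨h1, h2⟩
          refine ⟨fun i => n i.succ, ?_, ?_⟩
          · simpa [wSet, Fin.sum_univ_succ, h2] using h1
          · funext i
            refine Fin.cases ?_ (fun j => ?_) i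
            · simp [h2]
            · simp
        · rintro ⟨m, hm, rfl⟩
          refine ⟨?_, by simp⟩
          simpa [wSet, Fin.sum_univ_succ] using hm
      rw [this]
      apply Set.ncard_image_of_injective
      intro a b hab
      funext i
      simpa using congrFun hab i.succ
    · intro a b hab
      funext i
      refine Fin.cases ?_ (fun j => ?_) i
      · simpa using congrFun hab 0
      · simpa using congrFun hab j.succ
    · exact fun d n hn => hn.1
    · intro d n hn
      have hn' : ∑ i, w i * n i = d := hn
      refine ⟨?_, fun h => by simpa using h.2⟩
      show ∑ i, w i * _ = _
      rw [Fin.sum_univ_succ] at hn' ⊢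
      simp only [Fin.cons_zero, Fin.cons_succ]
      rw [← hn']; ring
    · intro d n hn hn2
      have h0 : n 0 ≠ 0 := fun h => hn2 ⟨hn, h⟩
      have hn' : ∑ i, w i * n i = d := hn
      rw [Fin.sum_univ_succ] at hn'
      obtain ⟨m, hm⟩ := Nat.exists_eq_succ_of_ne_zero h0
      rw [hm, Nat.mul_succ] at hn'
      refine ⟨by omega, Fin.cons m (fun i => n i.succ), ?_, ?_⟩
      · show ∑ i, w i * _ = _
        rw [Fin.sum_univ_succ]
        simp only [Fin.cons_zero, Fin.cons_succ]
        omega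
      · funext i
        refine Fin.cases ?_ (fun j => ?_) i
        · simp [hm]
        · simp

/-- Degrees of the ten generators of the hive monoid. -/
def hw : Fin 10 → ℕ := ![1, 1, 2, 2, 2, 3, 3, 3, 3, 4]

/-- Normal forms of weight `d`. -/
def nfSet (d : ℕ) : Set (Fin 10 → ℕ) := {n | n ∈ wSet hw d ∧ (n 3 = 0 ∨ n 9 = 0)}

/-- The combination of the generators with given multiplicities. -/
def toHive (n : Fin 10 → ℕ) : Fin 10 → ℤ :=
  ![0,
    (n 1 : ℤ) + (n 3 : ℤ) + (n 4 : ℤ) + (n 6 : ℤ) + (n 7 : ℤ) + (n 8 : ℤ) + (n 9 : ℤ),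
    (n 0 : ℤ) + (n 1 : ℤ) + (n 2 : ℤ) + (n 3 : ℤ) + (n 4 : ℤ) + (n 5 : ℤ) + (n 6 : ℤ) + (n 7 : ℤ) + (n 8 : ℤ) + 2 * (n 9 : ℤ),
    (n 1 : ℤ) + (n 3 : ℤ) + 2 * (n 4 : ℤ) + (n 6 : ℤ) + 2 * (n 7 : ℤ) + 2 * (n 8 : ℤ) + 2 * (n 9 : ℤ),
    (n 0 : ℤ) + (n 1 : ℤ) + (n 2 : ℤ) + 2 * (n 3 : ℤ) + 2 * (n 4 : ℤ) + (n 5 : ℤ) + 2 * (n 6 : ℤ) + 2 * (n 7 : ℤ) + 2 * (n 8 : ℤ) + 3 * (n 9 : ℤ),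
    (n 0 : ℤ) + (n 1 : ℤ) + 2 * (n 2 : ℤ) + 2 * (n 3 : ℤ) + 2 * (n 4 : ℤ) + 2 * (n 5 : ℤ) + 2 * (n 6 : ℤ) + 2 * (n 7 : ℤ) + 2 * (n 8 : ℤ) + 3 * (n 9 : ℤ),
    (n 1 : ℤ) + (n 3 : ℤ) + 2 * (n 4 : ℤ) + (n 6 : ℤ) + 2 * (n 7 : ℤ) + 3 * (n 8 : ℤ) + 2 * (n 9 : ℤ),
    (n 0 : ℤ) + (n 1 : ℤ) + (n 2 : ℤ) + 2 * (n 3 : ℤ) + 2 * (n 4 : ℤ) + (n 5 : ℤ) + 2 * (n 6 : ℤ) + 3 * (n 7 : ℤ) + 3 * (n 8 : ℤ) + 3 * (n 9 : ℤ),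
    (n 0 : ℤ) + (n 1 : ℤ) + 2 * (n 2 : ℤ) + 2 * (n 3 : ℤ) + 2 * (n 4 : ℤ) + 2 * (n 5 : ℤ) + 3 * (n 6 : ℤ) + 3 * (n 7 : ℤ) + 3 * (n 8 : ℤ) + 4 * (n 9 : ℤ),
    (n 0 : ℤ) + (n 1 : ℤ) + 2 * (n 2 : ℤ) + 2 * (n 3 : ℤ) + 2 * (n 4 : ℤ) + 3 * (n 5 : ℤ) + 3 * (n 6 : ℤ) + 3 * (n 7 : ℤ) + 3 * (n 8 : ℤ) + 4 * (n 9 : ℤ)]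

lemma mem_wSet_hw (n : Fin 10 → ℕ) (d : ℕ) : n ∈ wSet hw d ↔
    n 0 + n 1 + 2 * n 2 + 2 * n 3 + 2 * n 4 + 3 * n 5 + 3 * n 6 + 3 * n 7 + 3 * n 8 + 4 * n 9
      = d := by
  have : ∑ i, hw i * n i = n 0 + n 1 + 2 * n 2 + 2 * n 3 + 2 * n 4 + 3 * n 5 + 3 * n 6 + 3 * n 7
      + 3 * n 8 + 4 * n 9 := by
    have h : ∑ i, hw i * n i = (List.ofFn fun i => hw i * n i).sum := by rw [List.sum_ofFn]
    have h' : (List.ofFn fun i => hw i * n i) = [1 * n 0, 1 * n 1, 2 * n 2, 2 * n 3, 2 * n 4,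
      3 * n 5, 3 * n 6, 3 * n 7, 3 * n 8, 4 * n 9] := rfl
    rw [h, h']
    simp only [List.sum_cons, List.sum_nil]
    ring
  show ∑ i, hw i * n i = d ↔ _
  rw [this]

lemma toHive_injOn (d : ℕ) : Set.InjOn toHive (nfSet d) := by
  rintro a ⟨_, ha⟩ b ⟨_, hb⟩ hab
  have t1 : (a 1 : ℤ) + (a 3 : ℤ) + (a 4 : ℤ) + (a 6 : ℤ) + (a 7 : ℤ) + (a 8 : ℤ) + (a 9 : ℤ) = (b 1 : ℤ) + (b 3 : ℤ) + (b 4 : ℤ) + (b 6 : ℤ) + (b 7 : ℤ) + (b 8 : ℤ) + (b 9 : ℤ) := congrFun hab 1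
  have t2 : (a 0 : ℤ) + (a 1 : ℤ) + (a 2 : ℤ) + (a 3 : ℤ) + (a 4 : ℤ) + (a 5 : ℤ) + (a 6 : ℤ) + (a 7 : ℤ) + (a 8 : ℤ) + 2 * (a 9 : ℤ) = (b 0 : ℤ) + (b 1 : ℤ) + (b 2 : ℤ) + (b 3 : ℤ) + (b 4 : ℤ) + (b 5 : ℤ) + (b 6 : ℤ) + (b 7 : ℤ) + (b 8 : ℤ) + 2 * (b 9 : ℤ) := congrFun hab 2
  have t3 : (a 1 : ℤ) + (a 3 : ℤ) + 2 * (a 4 : ℤ) + (a 6 : ℤ) + 2 * (a 7 : ℤ) + 2 * (a 8 : ℤ) + 2 * (a 9 : ℤ) = (b 1 : ℤ) + (b 3 : ℤ) + 2 * (b 4 : ℤ) + (b 6 : ℤ) + 2 * (b 7 : ℤ) + 2 * (b 8 : ℤ) + 2 * (b 9 : ℤ) := congrFun hab 3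
  have t4 : (a 0 : ℤ) + (a 1 : ℤ) + (a 2 : ℤ) + 2 * (a 3 : ℤ) + 2 * (a 4 : ℤ) + (a 5 : ℤ) + 2 * (a 6 : ℤ) + 2 * (a 7 : ℤ) + 2 * (a 8 : ℤ) + 3 * (a 9 : ℤ) = (b 0 : ℤ) + (b 1 : ℤ) + (b 2 : ℤ) + 2 * (b 3 : ℤ) + 2 * (b 4 : ℤ) + (b 5 : ℤ) + 2 * (b 6 : ℤ) + 2 * (b 7 : ℤ) + 2 * (b 8 : ℤ) + 3 * (b 9 : ℤ) := congrFun hab 4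
  have t5 : (a 0 : ℤ) + (a 1 : ℤ) + 2 * (a 2 : ℤ) + 2 * (a 3 : ℤ) + 2 * (a 4 : ℤ) + 2 * (a 5 : ℤ) + 2 * (a 6 : ℤ) + 2 * (a 7 : ℤ) + 2 * (a 8 : ℤ) + 3 * (a 9 : ℤ) = (b 0 : ℤ) + (b 1 : ℤ) + 2 * (b 2 : ℤ) + 2 * (b 3 : ℤ) + 2 * (b 4 : ℤ) + 2 * (b 5 : ℤ) + 2 * (b 6 : ℤ) + 2 * (b 7 : ℤ) + 2 * (b 8 : ℤ) + 3 * (b 9 : ℤ) := congrFun hab 5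
  have t6 : (a 1 : ℤ) + (a 3 : ℤ) + 2 * (a 4 : ℤ) + (a 6 : ℤ) + 2 * (a 7 : ℤ) + 3 * (a 8 : ℤ) + 2 * (a 9 : ℤ) = (b 1 : ℤ) + (b 3 : ℤ) + 2 * (b 4 : ℤ) + (b 6 : ℤ) + 2 * (b 7 : ℤ) + 3 * (b 8 : ℤ) + 2 * (b 9 : ℤ) := congrFun hab 6
  have t7 : (a 0 : ℤ) + (a 1 : ℤ) + (a 2 : ℤ) + 2 * (a 3 : ℤ) + 2 * (a 4 : ℤ) + (a 5 : ℤ) + 2 * (a 6 : ℤ) + 3 * (a 7 : ℤ) + 3 * (a 8 : ℤ) + 3 * (a 9 : ℤ) = (b 0 : ℤ) + (b 1 : ℤ) + (b 2 : ℤ) + 2 * (b 3 : ℤ) + 2 * (b 4 : ℤ) + (b 5 : ℤ) + 2 * (b 6 : ℤ) + 3 * (b 7 : ℤ) + 3 * (b 8 : ℤ) + 3 * (b 9 : ℤ) := congrFun hab 7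
  have t8 : (a 0 : ℤ) + (a 1 : ℤ) + 2 * (a 2 : ℤ) + 2 * (a 3 : ℤ) + 2 * (a 4 : ℤ) + 2 * (a 5 : ℤ) + 3 * (a 6 : ℤ) + 3 * (a 7 : ℤ) + 3 * (a 8 : ℤ) + 4 * (a 9 : ℤ) = (b 0 : ℤ) + (b 1 : ℤ) + 2 * (b 2 : ℤ) + 2 * (b 3 : ℤ) + 2 * (b 4 : ℤ) + 2 * (b 5 : ℤ) + 3 * (b 6 : ℤ) + 3 * (b 7 : ℤ) + 3 * (b 8 : ℤ) + 4 * (b 9 : ℤ) := congrFun hab 8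
  have t9 : (a 0 : ℤ) + (a 1 : ℤ) + 2 * (a 2 : ℤ) + 2 * (a 3 : ℤ) + 2 * (a 4 : ℤ) + 3 * (a 5 : ℤ) + 3 * (a 6 : ℤ) + 3 * (a 7 : ℤ) + 3 * (a 8 : ℤ) + 4 * (a 9 : ℤ) = (b 0 : ℤ) + (b 1 : ℤ) + 2 * (b 2 : ℤ) + 2 * (b 3 : ℤ) + 2 * (b 4 : ℤ) + 3 * (b 5 : ℤ) + 3 * (b 6 : ℤ) + 3 * (b 7 : ℤ) + 3 * (b 8 : ℤ) + 4 * (b 9 : ℤ) := congrFun hab 9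
  have u1 : a 1 = b 1 := by omega
  have u2 : a 2 = b 2 := by omega
  have u5 : a 5 = b 5 := by omega
  have u7 : a 7 = b 7 := by omega
  have u8 : a 8 = b 8 := by omega
  clear hab
  have v : (a 3 : ℤ) - a 9 = b 3 - b 9 := by omega
  have u3 : a 3 = b 3 := by omega
  have u9 : a 9 = b 9 := by omega
  have u6 : a 6 = b 6 := by omega
  have u4 : a 4 = b 4 := by omega
  have u0 : a 0 = b 0 := by omega
  funext i
  fin_cases i
  exacts [u0, u1, u2, u3, u4, u5, u6, u7, u8, u9]

lemma hives_eq (d : ℕ) : {h : Fin 10 → ℤ | IsHive3 h ∧ h 9 = (d : ℤ)} = toHive '' nfSet d := by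
  ext h
  constructor
  · rintro ⟨⟨e0, e1, e2, e3, e4, e5, e6, e7, e8, e9, a1, a2, a3, b1, b2, b3, c1, c2, c3⟩, hd⟩
    obtain ⟨p, hp⟩ : ∃ p : ℤ, p = min (h 1 + h 4 - h 3 - h 2) (h 4 + h 8 - h 7 - h 5) := ⟨_, rfl⟩
    obtain ⟨n6, h6⟩ := Int.eq_ofNat_of_zero_le (a := p) (by omega)
    obtain ⟨n3, h3⟩ := Int.eq_ofNat_of_zero_le (a := h 1 + h 4 - h 3 - h 2 - p) (by omega)
    obtain ⟨n9, h9⟩ := Int.eq_ofNat_of_zero_le (a := h 4 + h 8 - h 7 - h 5 - p) (by omega)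
    obtain ⟨n1, h1⟩ := Int.eq_ofNat_of_zero_le (a := h 1 + h 2 - h 4) (by omega)
    obtain ⟨n2, h2⟩ := Int.eq_ofNat_of_zero_le (a := h 8 + h 5 - h 9 - h 4) (by omega)
    obtain ⟨n5, h5⟩ := Int.eq_ofNat_of_zero_le (a := h 9 - h 8) (by omega)
    obtain ⟨n7, h7⟩ := Int.eq_ofNat_of_zero_le (a := h 3 + h 7 - h 6 - h 4) (by omega)
    obtain ⟨n8, h8⟩ := Int.eq_ofNat_of_zero_le (a := h 6 - h 3) (by omega)
    obtain ⟨n4, h4⟩ := Int.eq_ofNat_of_zero_le (a := h 3 + h 4 - h 7 - h 1 - n9) (by omega)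
    obtain ⟨n0, h0⟩ := Int.eq_ofNat_of_zero_le (a := h 4 + h 2 - h 5 - h 1 - n9) (by omega)
    refine ⟨![n0, n1, n2, n3, n4, n5, n6, n7, n8, n9], ⟨?_, ?_⟩, ?_⟩
    · rw [mem_wSet_hw]
      show n0 + n1 + 2 * n2 + 2 * n3 + 2 * n4 + 3 * n5 + 3 * n6 + 3 * n7 + 3 * n8 + 4 * n9 = d
      omega
    · show n3 = 0 ∨ n9 = 0
      omega
    · funext i
      fin_cases i
      · show 0 = h 0
        omega
      · show (n1 : ℤ) + (n3 : ℤ) + (n4 : ℤ) + (n6 : ℤ) + (n7 : ℤ) + (n8 : ℤ) + (n9 : ℤ) = h 1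
        omega
      · show (n0 : ℤ) + (n1 : ℤ) + (n2 : ℤ) + (n3 : ℤ) + (n4 : ℤ) + (n5 : ℤ) + (n6 : ℤ) + (n7 : ℤ) + (n8 : ℤ) + 2 * (n9 : ℤ) = h 2
        omega
      · show (n1 : ℤ) + (n3 : ℤ) + 2 * (n4 : ℤ) + (n6 : ℤ) + 2 * (n7 : ℤ) + 2 * (n8 : ℤ) + 2 * (n9 : ℤ) = h 3
        omega
      · show (n0 : ℤ) + (n1 : ℤ) + (n2 : ℤ) + 2 * (n3 : ℤ) + 2 * (n4 : ℤ) + (n5 : ℤ) + 2 * (n6 : ℤ) + 2 * (n7 : ℤ) + 2 * (n8 : ℤ) + 3 * (n9 : ℤ) = h 4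
        omega
      · show (n0 : ℤ) + (n1 : ℤ) + 2 * (n2 : ℤ) + 2 * (n3 : ℤ) + 2 * (n4 : ℤ) + 2 * (n5 : ℤ) + 2 * (n6 : ℤ) + 2 * (n7 : ℤ) + 2 * (n8 : ℤ) + 3 * (n9 : ℤ) = h 5
        omega
      · show (n1 : ℤ) + (n3 : ℤ) + 2 * (n4 : ℤ) + (n6 : ℤ) + 2 * (n7 : ℤ) + 3 * (n8 : ℤ) + 2 * (n9 : ℤ) = h 6
        omega
      · show (n0 : ℤ) + (n1 : ℤ) + (n2 : ℤ) + 2 * (n3 : ℤ) + 2 * (n4 : ℤ) + (n5 : ℤ) + 2 * (n6 : ℤ) + 3 * (n7 : ℤ) + 3 * (n8 : ℤ) + 3 * (n9 : ℤ) = h 7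
        omega
      · show (n0 : ℤ) + (n1 : ℤ) + 2 * (n2 : ℤ) + 2 * (n3 : ℤ) + 2 * (n4 : ℤ) + 2 * (n5 : ℤ) + 3 * (n6 : ℤ) + 3 * (n7 : ℤ) + 3 * (n8 : ℤ) + 4 * (n9 : ℤ) = h 8
        omega
      · show (n0 : ℤ) + (n1 : ℤ) + 2 * (n2 : ℤ) + 2 * (n3 : ℤ) + 2 * (n4 : ℤ) + 3 * (n5 : ℤ) + 3 * (n6 : ℤ) + 3 * (n7 : ℤ) + 3 * (n8 : ℤ) + 4 * (n9 : ℤ) = h 9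
        omega
  · rintro ⟨n, ⟨hn, _⟩, rfl⟩
    rw [mem_wSet_hw] at hn
    have t0 : toHive n 0 = 0 := rfl
    have t1 : toHive n 1 = (n 1 : ℤ) + (n 3 : ℤ) + (n 4 : ℤ) + (n 6 : ℤ) + (n 7 : ℤ) + (n 8 : ℤ) + (n 9 : ℤ) := rfl
    have t2 : toHive n 2 = (n 0 : ℤ) + (n 1 : ℤ) + (n 2 : ℤ) + (n 3 : ℤ) + (n 4 : ℤ) + (n 5 : ℤ) + (n 6 : ℤ) + (n 7 : ℤ) + (n 8 : ℤ) + 2 * (n 9 : ℤ) := rfl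
    have t3 : toHive n 3 = (n 1 : ℤ) + (n 3 : ℤ) + 2 * (n 4 : ℤ) + (n 6 : ℤ) + 2 * (n 7 : ℤ) + 2 * (n 8 : ℤ) + 2 * (n 9 : ℤ) := rfl
    have t4 : toHive n 4 = (n 0 : ℤ) + (n 1 : ℤ) + (n 2 : ℤ) + 2 * (n 3 : ℤ) + 2 * (n 4 : ℤ) + (n 5 : ℤ) + 2 * (n 6 : ℤ) + 2 * (n 7 : ℤ) + 2 * (n 8 : ℤ) + 3 * (n 9 : ℤ) := rfl
    have t5 : toHive n 5 = (n 0 : ℤ) + (n 1 : ℤ) + 2 * (n 2 : ℤ) + 2 * (n 3 : ℤ) + 2 * (n 4 : ℤ) + 2 * (n 5 : ℤ) + 2 * (n 6 : ℤ) + 2 * (n 7 : ℤ) + 2 * (n 8 : ℤ) + 3 * (n 9 : ℤ) := rfl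
    have t6 : toHive n 6 = (n 1 : ℤ) + (n 3 : ℤ) + 2 * (n 4 : ℤ) + (n 6 : ℤ) + 2 * (n 7 : ℤ) + 3 * (n 8 : ℤ) + 2 * (n 9 : ℤ) := rfl
    have t7 : toHive n 7 = (n 0 : ℤ) + (n 1 : ℤ) + (n 2 : ℤ) + 2 * (n 3 : ℤ) + 2 * (n 4 : ℤ) + (n 5 : ℤ) + 2 * (n 6 : ℤ) + 3 * (n 7 : ℤ) + 3 * (n 8 : ℤ) + 3 * (n 9 : ℤ) := rfl
    have t8 : toHive n 8 = (n 0 : ℤ) + (n 1 : ℤ) + 2 * (n 2 : ℤ) + 2 * (n 3 : ℤ) + 2 * (n 4 : ℤ) + 2 * (n 5 : ℤ) + 3 * (n 6 : ℤ) + 3 * (n 7 : ℤ) + 3 * (n 8 : ℤ) + 4 * (n 9 : ℤ) := rfl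
    have t9 : toHive n 9 = (n 0 : ℤ) + (n 1 : ℤ) + 2 * (n 2 : ℤ) + 2 * (n 3 : ℤ) + 2 * (n 4 : ℤ) + 3 * (n 5 : ℤ) + 3 * (n 6 : ℤ) + 3 * (n 7 : ℤ) + 3 * (n 8 : ℤ) + 4 * (n 9 : ℤ) := rfl
    refine ⟨?_, by omega⟩
    unfold IsHive3
    rw [t0, t1, t2, t3, t4, t5, t6, t7, t8, t9]
    refine ⟨?_, ?_, ?_, ?_, ?_, ?_, ?_, ?_, ?_, ?_, ?_, ?_, ?_, ?_, ?_, ?_, ?_, ?_, ?_⟩ <;> omega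

lemma hw_pos : ∀ i, 0 < hw i := by decide

lemma nf_gf : (PowerSeries.mk fun d => ((wSet hw d).ncard : ℤ)) * (1 - PowerSeries.X ^ 6) =
    PowerSeries.mk fun d => ((nfSet d).ncard : ℤ) := by
  refine mk_mul_one_sub (wSet hw) nfSet (wSet_finite hw hw_pos) 6
    (fun n => n + ![0, 0, 0, 1, 0, 0, 0, 0, 0, 1]) (add_left_injective _)
    (fun d n hn => hn.1) ?_ ?_
  · intro d n hn
    refine ⟨?_, ?_⟩
    · rw [mem_wSet_hw] at hn ⊢
      show (n 0 + 0) + (n 1 + 0) + 2 * (n 2 + 0) + 2 * (n 3 + 1) + 2 * (n 4 + 0) + 3 * (n 5 + 0)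
        + 3 * (n 6 + 0) + 3 * (n 7 + 0) + 3 * (n 8 + 0) + 4 * (n 9 + 1) = d + 6
      omega
    · rintro ⟨_, h⟩
      have h' : n 3 + 1 = 0 ∨ n 9 + 1 = 0 := h
      omega
  · intro d n hn hn2
    have h : ¬ (n 3 = 0 ∨ n 9 = 0) := fun h => hn2 ⟨hn, h⟩
    rw [mem_wSet_hw] at hn
    refine ⟨by omega, ![n 0, n 1, n 2, n 3 - 1, n 4, n 5, n 6, n 7, n 8, n 9 - 1], ?_, ?_⟩
    · rw [mem_wSet_hw]
      show n 0 + n 1 + 2 * n 2 + 2 * (n 3 - 1) + 2 * n 4 + 3 * n 5 + 3 * n 6 + 3 * n 7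
        + 3 * n 8 + 4 * (n 9 - 1) = d - 6
      omega
    · funext i
      fin_cases i
      · rfl
      · rfl
      · rfl
      · show n 3 - 1 + 1 = n 3
        omega
      · rfl
      · rfl
      · rfl
      · rfl
      · rfl
      · show n 9 - 1 + 1 = n 9
        omega

lemma hive_gf : (PowerSeries.mk fun d => (hiveCount3 d : ℤ)) *
      ((1 - PowerSeries.X) ^ 2 * (1 - PowerSeries.X ^ 2) ^ 3 *
        (1 - PowerSeries.X ^ 3) ^ 4 * (1 - PowerSeries.X ^ 4)) =
      1 - PowerSeries.X ^ 6 := by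
  have h1 : ∀ d, hiveCount3 d = (nfSet d).ncard := by
    intro d
    rw [hiveCount3, hives_eq, (toHive_injOn d).ncard_image]
  have h2 := wSet_gf hw hw_pos
  have h3 : ∏ i, ((1 : PowerSeries ℤ) - PowerSeries.X ^ hw i) =
      (1 - PowerSeries.X) ^ 2 * (1 - PowerSeries.X ^ 2) ^ 3 *
        (1 - PowerSeries.X ^ 3) ^ 4 * (1 - PowerSeries.X ^ 4) := by
    have : ∏ i, ((1 : PowerSeries ℤ) - PowerSeries.X ^ hw i) =
      (List.map (fun k => (1 : PowerSeries ℤ) - PowerSeries.X ^ k)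
        [1, 1, 2, 2, 2, 3, 3, 3, 3, 4]).prod := by
      rw [← List.prod_ofFn]
      rfl
    rw [this]
    simp only [List.map_cons, List.map_nil, List.prod_cons, List.prod_nil]
    ring
  simp only [h1]
  rw [← nf_gf, ← h3, mul_right_comm, h2, one_mul]

lemma coeff_num_mul (k : ℕ) [k.AtLeastTwo] (d : ℕ) (p : PowerSeries ℤ) :
    PowerSeries.coeff d ((ofNat(k) : PowerSeries ℤ) * p) =
      (ofNat(k) : ℤ) * PowerSeries.coeff d p := by
  have : (ofNat(k) : PowerSeries ℤ) = PowerSeries.C (ofNat(k) : ℤ) := by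
    rw [map_ofNat]
  rw [this, PowerSeries.coeff_C_mul]

lemma hive_coeff (d : ℕ) (hd : d < 10) : (hiveCount3 d : ℤ) = PowerSeries.coeff d
    ((1) * PowerSeries.X ^ 0 + (2) * PowerSeries.X ^ 1 + (6) * PowerSeries.X ^ 2 + (14) * PowerSeries.X ^ 3 + (29) * PowerSeries.X ^ 4 + (56) * PowerSeries.X ^ 5 + (105) * PowerSeries.X ^ 6 + (182) * PowerSeries.X ^ 7 + (308) * PowerSeries.X ^ 8 + (502) * PowerSeries.X ^ 9 : PowerSeries ℤ) := by
  have h := hive_gf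
  set M : PowerSeries ℤ := PowerSeries.mk fun d => (hiveCount3 d : ℤ) with hM
  set D : PowerSeries ℤ := (1 - PowerSeries.X) ^ 2 * (1 - PowerSeries.X ^ 2) ^ 3 *
        (1 - PowerSeries.X ^ 3) ^ 4 * (1 - PowerSeries.X ^ 4) with hD
  set P : PowerSeries ℤ := (1) * PowerSeries.X ^ 0 + (2) * PowerSeries.X ^ 1 + (6) * PowerSeries.X ^ 2 + (14) * PowerSeries.X ^ 3 + (29) * PowerSeries.X ^ 4 + (56) * PowerSeries.X ^ 5 + (105) * PowerSeries.X ^ 6 + (182) * PowerSeries.X ^ 7 + (308) * PowerSeries.X ^ 8 + (502) * PowerSeries.X ^ 9 with hP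
  have hPD : P * D + PowerSeries.X ^ 10 * ((793) * PowerSeries.X ^ 0 + (-366) * PowerSeries.X ^ 1 + (-2187) * PowerSeries.X ^ 2 + (-1826) * PowerSeries.X ^ 3 + (2817) * PowerSeries.X ^ 4 + (7716) * PowerSeries.X ^ 5 + (891) * PowerSeries.X ^ 6 + (-8436) * PowerSeries.X ^ 7 + (-11082) * PowerSeries.X ^ 8 + (274) * PowerSeries.X ^ 9 + (13590) * PowerSeries.X ^ 10 + (10470) * PowerSeries.X ^ 11 + (-1241) * PowerSeries.X ^ 12 + (-13530) * PowerSeries.X ^ 13 + (-8754) * PowerSeries.X ^ 14 + (3906) * PowerSeries.X ^ 15 + (8841) * PowerSeries.X ^ 16 + (4468) * PowerSeries.X ^ 17 + (-4235) * PowerSeries.X ^ 18 + (-3612) * PowerSeries.X ^ 19 + (-129) * PowerSeries.X ^ 20 + (1438) * PowerSeries.X ^ 21 + (696) * PowerSeries.X ^ 22 + (-502) * PowerSeries.X ^ 23) = 1 - PowerSeries.X ^ 6 := by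
    rw [hP, hD]; ring
  have hu : IsUnit D := by
    rw [PowerSeries.isUnit_iff_constantCoeff, hD]
    simp
  have hdvd : PowerSeries.X ^ 10 ∣ M - P := by
    rw [← hu.dvd_mul_right]
    exact ⟨(793) * PowerSeries.X ^ 0 + (-366) * PowerSeries.X ^ 1 + (-2187) * PowerSeries.X ^ 2 + (-1826) * PowerSeries.X ^ 3 + (2817) * PowerSeries.X ^ 4 + (7716) * PowerSeries.X ^ 5 + (891) * PowerSeries.X ^ 6 + (-8436) * PowerSeries.X ^ 7 + (-11082) * PowerSeries.X ^ 8 + (274) * PowerSeries.X ^ 9 + (13590) * PowerSeries.X ^ 10 + (10470) * PowerSeries.X ^ 11 + (-1241) * PowerSeries.X ^ 12 + (-13530) * PowerSeries.X ^ 13 + (-8754) * PowerSeries.X ^ 14 + (3906) * PowerSeries.X ^ 15 + (8841) * PowerSeries.X ^ 16 + (4468) * PowerSeries.X ^ 17 + (-4235) * PowerSeries.X ^ 18 + (-3612) * PowerSeries.X ^ 19 + (-129) * PowerSeries.X ^ 20 + (1438) * PowerSeries.X ^ 21 + (696) * PowerSeries.X ^ 22 + (-502) * PowerSeries.X ^ 23,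 by linear_combination h - hPD⟩
  have := (PowerSeries.X_pow_dvd_iff.mp hdvd) d hd
  rw [map_sub, hM, PowerSeries.coeff_mk] at this
  linarith

/-- The generating function of the numbers of hives for `GL(3)` with `h₄₄ = d`
satisfies `(Σ m_d t^d) (1-t)² (1-t²)³ (1-t³)⁴ (1-t⁴) = 1 - t⁶`; in particular
`m₀, ..., m₉ = 1, 2, 6, 14, 29, 56, 105, 182, 308, 502`. -/
theorem hiveCount3_generating_function :
    (PowerSeries.mk fun d => (hiveCount3 d : ℤ)) *
      ((1 - PowerSeries.X) ^ 2 * (1 - PowerSeries.X ^ 2) ^ 3 *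
        (1 - PowerSeries.X ^ 3) ^ 4 * (1 - PowerSeries.X ^ 4)) =
      1 - PowerSeries.X ^ 6 ∧
    hiveCount3 0 = 1 ∧ hiveCount3 1 = 2 ∧ hiveCount3 2 = 6 ∧ hiveCount3 3 = 14 ∧
    hiveCount3 4 = 29 ∧ hiveCount3 5 = 56 ∧ hiveCount3 6 = 105 ∧ hiveCount3 7 = 182 ∧
    hiveCount3 8 = 308 ∧ hiveCount3 9 = 502 := by
  refine ⟨hive_gf, ?_, ?_, ?_, ?_, ?_, ?_, ?_, ?_, ?_, ?_⟩
  · exact_mod_cast (hive_coeff 0 (by norm_num)).trans (b := _) (c := (1 : ℤ)) (by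
      simp only [map_add, coeff_num_mul, PowerSeries.coeff_X_pow, one_mul]; norm_num)
  · exact_mod_cast (hive_coeff 1 (by norm_num)).trans (b := _) (c := (2 : ℤ)) (by
      simp only [map_add, coeff_num_mul, PowerSeries.coeff_X_pow, one_mul]; norm_num)
  · exact_mod_cast (hive_coeff 2 (by norm_num)).trans (b := _) (c := (6 : ℤ)) (by
      simp only [map_add, coeff_num_mul, PowerSeries.coeff_X_pow, one_mul]; norm_num)
  · exact_mod_cast (hive_coeff 3 (by norm_num)).trans (b := _) (c := (14 : ℤ)) (by
      simp only [map_add, coeff_num_mul, PowerSeries.coeff_X_pow, one_mul]; norm_num)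
  · exact_mod_cast (hive_coeff 4 (by norm_num)).trans (b := _) (c := (29 : ℤ)) (by
      simp only [map_add, coeff_num_mul, PowerSeries.coeff_X_pow, one_mul]; norm_num)
  · exact_mod_cast (hive_coeff 5 (by norm_num)).trans (b := _) (c := (56 : ℤ)) (by
      simp only [map_add, coeff_num_mul, PowerSeries.coeff_X_pow, one_mul]; norm_num)
  · exact_mod_cast (hive_coeff 6 (by norm_num)).trans (b := _) (c := (105 : ℤ)) (by
      simp only [map_add, coeff_num_mul, PowerSeries.coeff_X_pow, one_mul]; norm_num)
  · exact_mod_cast (hive_coeff 7 (by norm_num)).trans (b := _) (c := (182 : ℤ)) (by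
      simp only [map_add, coeff_num_mul, PowerSeries.coeff_X_pow, one_mul]; norm_num)
  · exact_mod_cast (hive_coeff 8 (by norm_num)).trans (b := _) (c := (308 : ℤ)) (by
      simp only [map_add, coeff_num_mul, PowerSeries.coeff_X_pow, one_mul]; norm_num)
  · exact_mod_cast (hive_coeff 9 (by norm_num)).trans (b := _) (c := (502 : ℤ)) (by
      simp only [map_add, coeff_num_mul, PowerSeries.coeff_X_pow, one_mul]; norm_num)
end

section
/- The five polynomials g_1 = det [[y_{11}, y_{12}], [y_{21}, y_{22}]], g_2 = det [[x_{11}, y_{11}], [x_{21}, y_{21}]], g_3 = x_{11}, g_4 = det [[x_{11}, x_{12}], [x_{21}, x_{22}]], g_5 = y_{11} in the polynomial ring C[x_{ab}, y_{ab} : 1 ≤ a, b ≤ 2] are algebraically independent over C. Consequently TA(2) is isomorphic as a C-algebra to a polynomial algebra in five indeterminates. -/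
open MvPolynomial

/-- The polynomial ring `ℂ[M_n ⊕ M_n]` in the variables `x_{ab}` (indexed by
`Sum.inl (a, b)`) and `y_{ab}` (indexed by `Sum.inr (a, b)`), `1 ≤ a, b ≤ n`. -/
abbrev MV (n : ℕ) := MvPolynomial ((Fin n × Fin n) ⊕ (Fin n × Fin n)) ℂ

/-- `g` is upper triangular with all diagonal entries equal to `1`. -/
def IsUniUpper {n : ℕ} (g : Matrix (Fin n) (Fin n) ℂ) : Prop :=
  (∀ i, g i i = 1) ∧ ∀ i j : Fin n, j < i → g i j = 0

/-- The action of `(g₁, g₂, g₃) ∈ GL(n)³` on `ℂ[M_n ⊕ M_n]`, given by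
`(g·f)(m₁, m₂) = f(g₁ᵀ m₁ g₂, g₁ᵀ m₂ g₃)`: it substitutes for `x_{ab}` the
`(a,b)` entry of `g₁ᵀ X g₂` and for `y_{ab}` the `(a,b)` entry of `g₁ᵀ Y g₃`. -/
noncomputable def act (n : ℕ) (g1 g2 g3 : Matrix (Fin n) (Fin n) ℂ) : MV n →ₐ[ℂ] MV n :=
  aeval (Sum.elim
    (fun p : Fin n × Fin n => ∑ c : Fin n, ∑ d : Fin n,
      C (g1 c p.1) * C (g2 d p.2) * X (Sum.inl (c, d)))
    (fun p : Fin n × Fin n => ∑ c : Fin n, ∑ d : Fin n,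
      C (g1 c p.1) * C (g3 d p.2) * X (Sum.inr (c, d))))

/-- The tensor product algebra `TA(n)`: the subalgebra of `ℂ[M_n ⊕ M_n]` of
polynomials invariant under `U_n × U_n × U_n`. -/
noncomputable def TA (n : ℕ) : Subalgebra ℂ (MV n) where
  carrier := {f | ∀ g1 g2 g3 : Matrix (Fin n) (Fin n) ℂ,
      IsUniUpper g1 → IsUniUpper g2 → IsUniUpper g3 → act n g1 g2 g3 f = f}
  mul_mem' := by
    intro a b ha hb g1 g2 g3 u1 u2 u3
    rw [map_mul, ha g1 g2 g3 u1 u2 u3, hb g1 g2 g3 u1 u2 u3]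
  one_mem' := by
    intro g1 g2 g3 u1 u2 u3
    rw [map_one]
  add_mem' := by
    intro a b ha hb g1 g2 g3 u1 u2 u3
    rw [map_add, ha g1 g2 g3 u1 u2 u3, hb g1 g2 g3 u1 u2 u3]
  zero_mem' := by
    intro g1 g2 g3 u1 u2 u3
    rw [map_zero]
  algebraMap_mem' := by
    intro r g1 g2 g3 u1 u2 u3
    exact (act n g1 g2 g3).commutes r

/-- The coordinate `x_{ab}` on the first matrix summand (`a b` zero-based). -/
noncomputable def xv (a b : Fin 2) : MV 2 := X (Sum.inl (a, b))

/-- The coordinate `y_{ab}` on the second matrix summand (`a b` zero-based). -/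
noncomputable def yv (a b : Fin 2) : MV 2 := X (Sum.inr (a, b))

/-- `g₁ = det [[y₁₁, y₁₂], [y₂₁, y₂₂]]`. -/
noncomputable def g1 : MV 2 := yv 0 0 * yv 1 1 - yv 0 1 * yv 1 0

/-- `g₂ = det [[x₁₁, y₁₁], [x₂₁, y₂₁]]`. -/
noncomputable def g2 : MV 2 := xv 0 0 * yv 1 0 - yv 0 0 * xv 1 0

/-- `g₃ = x₁₁`. -/
noncomputable def g3 : MV 2 := xv 0 0

/-- `g₄ = det [[x₁₁, x₁₂], [x₂₁, x₂₂]]`. -/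
noncomputable def g4 : MV 2 := xv 0 0 * xv 1 1 - xv 0 1 * xv 1 0

/-- `g₅ = y₁₁`. -/
noncomputable def g5 : MV 2 := yv 0 0

/-- A point of `M_2 ⊕ M_2`. -/
def pt (a b c d p q r s : ℂ) : (Fin 2 × Fin 2) ⊕ (Fin 2 × Fin 2) → ℂ :=
  Sum.elim (fun ij => !![a, b; c, d] ij.1 ij.2) (fun ij => !![p, q; r, s] ij.1 ij.2)

lemma pt_eta (m : (Fin 2 × Fin 2) ⊕ (Fin 2 × Fin 2) → ℂ) :
    m = pt (m (Sum.inl (0, 0))) (m (Sum.inl (0, 1))) (m (Sum.inl (1, 0))) (m (Sum.inl (1, 1)))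
      (m (Sum.inr (0, 0))) (m (Sum.inr (0, 1))) (m (Sum.inr (1, 0))) (m (Sum.inr (1, 1))) := by
  funext i
  rcases i with ⟨i, j⟩ | ⟨i, j⟩ <;> fin_cases i <;> fin_cases j <;> simp [pt]

lemma eval_G (a b c d p q r s : ℂ) (P : MvPolynomial (Fin 5) ℂ) :
    eval (pt a b c d p q r s) (aeval ![g1, g2, g3, g4, g5] P) =
      eval ![p * s - q * r, a * r - p * c, a, a * d - b * c, p] P := by
  induction P using MvPolynomial.induction_on with
  | C x => simp [algebraMap_eq]
  | add f g hf hg => simp only [map_add, hf, hg]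
  | mul_X f i hf =>
    simp only [map_mul, hf, aeval_X, eval_X]
    congr 1
    fin_cases i <;> simp [g1, g2, g3, g4, g5, xv, yv, pt]

/-- The unipotent matrix with parameter `t`. -/
def uu (t : ℂ) : Matrix (Fin 2) (Fin 2) ℂ := !![1, t; 0, 1]

lemma uu_uni (t : ℂ) : IsUniUpper (uu t) := by
  refine ⟨fun i => ?_, fun i j h => ?_⟩
  · fin_cases i <;> simp [uu]
  · fin_cases i <;> fin_cases j <;> simp [uu] at h ⊢

lemma eq_uu (g : Matrix (Fin 2) (Fin 2) ℂ) (h : IsUniUpper g) : g = uu (g 0 1) := by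
  ext i j
  have h0 := h.1 0
  have h1 := h.1 1
  have h2 := h.2 1 0 (by decide)
  fin_cases i <;> fin_cases j <;> simp [uu, h0, h1, h2]

lemma eval_act (v t u a b c d p q r s : ℂ) (f : MV 2) :
    eval (pt a b c d p q r s) (act 2 (uu v) (uu t) (uu u) f) =
      eval (pt a (b + t * a) (c + v * a) (d + v * b + t * (c + v * a))
        p (q + u * p) (r + v * p) (s + v * q + u * (r + v * p))) f := by
  induction f using MvPolynomial.induction_on with
  | C x => simp [algebraMap_eq, act]
  | add f g hf hg => simp only [map_add, hf, hg]
  | mul_X f i hf =>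
    simp only [map_mul, hf, eval_X]
    congr 1
    rcases i with ⟨i, j⟩ | ⟨i, j⟩ <;> fin_cases i <;> fin_cases j <;>
      simp [act, uu, pt, Fin.sum_univ_two] <;> ring

lemma range_le : (aeval ![g1, g2, g3, g4, g5] : MvPolynomial (Fin 5) ℂ →ₐ[ℂ] MV 2).range ≤ TA 2 := by
  rintro _ ⟨P, rfl⟩ h1 h2 h3 u1 u2 u3
  rw [eq_uu h1 u1, eq_uu h2 u2, eq_uu h3 u3]
  apply MvPolynomial.funext
  intro m
  rw [pt_eta m, eval_act]
  simp only [AlgHom.coe_toRingHom, RingHom.coe_coe, AlgHom.toRingHom_eq_coe]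
  rw [eval_G, eval_G]
  congr 2
  funext i
  fin_cases i <;> simp <;> ring

lemma invariant_eval {f : MV 2} (hf : f ∈ TA 2) (a b c d p q r s : ℂ) (ha : a ≠ 0) (hp : p ≠ 0) :
    eval (pt a b c d p q r s) f =
      eval (pt a 0 0 ((a * d - b * c) / a) p 0 ((a * r - p * c) / a) ((p * s - q * r) / p)) f := by
  have h := hf (uu (-c / a)) (uu (-b / a)) (uu (-q / p)) (uu_uni _) (uu_uni _) (uu_uni _)
  rw [← h, eval_act, h]
  congr 2
  congr 1 <;> field_simp <;> ring

lemma homogenize (f : MV 2) : ∃ (N : ℕ) (P : MvPolynomial (Fin 5) ℂ),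
    ∀ z : Fin 5 → ℂ, z 2 ≠ 0 → z 4 ≠ 0 →
      (z 2 * z 4) ^ N * eval (pt (z 2) 0 0 (z 3 / z 2) (z 4) 0 (z 1 / z 2) (z 0 / z 4)) f =
        eval z P := by
  induction f using MvPolynomial.induction_on with
  | C x => exact ⟨0, C x, by simp⟩
  | add f g hf hg =>
    obtain ⟨N, P, hP⟩ := hf
    obtain ⟨M, Q, hQ⟩ := hg
    refine ⟨N + M, (X 2 * X 4) ^ M * P + (X 2 * X 4) ^ N * Q, fun z h2 h4 => ?_⟩
    simp only [map_add, map_mul, map_pow, eval_X, ← hP z h2 h4, ← hQ z h2 h4]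
    ring
  | mul_X f i hf =>
    obtain ⟨N, P, hP⟩ := hf
    have key : ∃ Q : MvPolynomial (Fin 5) ℂ, ∀ z : Fin 5 → ℂ, z 2 ≠ 0 → z 4 ≠ 0 →
      (z 2 * z 4) * (pt (z 2) 0 0 (z 3 / z 2) (z 4) 0 (z 1 / z 2) (z 0 / z 4) i) =
        eval z Q := by
      rcases i with ⟨i, j⟩ | ⟨i, j⟩ <;> fin_cases i <;> fin_cases j
      · exact ⟨X 2 * X 4 * X 2, fun z h2 h4 => by simp [pt]⟩
      · exact ⟨0, fun z h2 h4 => by simp [pt]⟩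
      · exact ⟨0, fun z h2 h4 => by simp [pt]⟩
      · exact ⟨X 3 * X 4, fun z h2 h4 => by simp [pt]; field_simp⟩
      · exact ⟨X 2 * X 4 * X 4, fun z h2 h4 => by simp [pt]⟩
      · exact ⟨0, fun z h2 h4 => by simp [pt]⟩
      · exact ⟨X 1 * X 4, fun z h2 h4 => by simp [pt]; field_simp⟩
      · exact ⟨X 0 * X 2, fun z h2 h4 => by simp [pt]; field_simp⟩
    obtain ⟨Q, hQ⟩ := key
    refine ⟨N + 1, P * Q, fun z h2 h4 => ?_⟩
    simp only [map_mul, eval_X, ← hP z h2 h4, ← hQ z h2 h4]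
    ring

lemma X_dvd_sub (i : Fin 5) (P : MvPolynomial (Fin 5) ℂ) :
    X i ∣ P - aeval (Function.update X i (0 : MvPolynomial (Fin 5) ℂ)) P := by
  rw [← Ideal.mem_span_singleton, ← Ideal.Quotient.eq]
  have : (Ideal.Quotient.mkₐ ℂ (Ideal.span {(X i : MvPolynomial (Fin 5) ℂ)})) =
    (Ideal.Quotient.mkₐ ℂ (Ideal.span {(X i : MvPolynomial (Fin 5) ℂ)})).comp
      (aeval (Function.update X i (0 : MvPolynomial (Fin 5) ℂ))) := by
    apply MvPolynomial.algHom_ext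
    intro j
    by_cases h : j = i
    · subst h
      simp [Ideal.Quotient.eq_zero_iff_mem, Ideal.mem_span_singleton]
    · simp [h]
  exact DFunLike.congr_fun this P

lemma dvd_of_eval (i : Fin 5) (P h : MvPolynomial (Fin 5) ℂ) (hh : h ≠ 0)
    (H : ∀ z : Fin 5 → ℂ, eval z h ≠ 0 → eval (Function.update z i 0) P = 0) : X i ∣ P := by
  have h1 := X_dvd_sub i P
  have h2 : h * aeval (Function.update X i (0 : MvPolynomial (Fin 5) ℂ)) P = 0 := by
    apply MvPolynomial.funext
    intro z
    have e : eval z (aeval (Function.update X i (0 : MvPolynomial (Fin 5) ℂ)) P) =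
        eval (Function.update z i 0) P := by
      clear h1 H
      induction P using MvPolynomial.induction_on with
      | C x => simp [algebraMap_eq]
      | add f g hf hg => simp only [map_add, hf, hg]
      | mul_X f j hf =>
        simp only [map_mul, hf, aeval_X, eval_X]
        congr 1
        by_cases hj : j = i
        · subst hj
          simp
        · simp [hj]
    rw [map_mul, e, map_zero]
    by_cases hz : eval z h = 0
    · rw [hz, zero_mul]
    · rw [H z hz, mul_zero]
  rcases mul_eq_zero.1 h2 with h3 | h3
  · exact absurd h3 hh
  · rwa [h3, sub_zero] at h1

lemma descend_a (f : MV 2)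
    (h : g3 * f ∈ (aeval ![g1, g2, g3, g4, g5] : MvPolynomial (Fin 5) ℂ →ₐ[ℂ] MV 2).range) :
    f ∈ (aeval ![g1, g2, g3, g4, g5] : MvPolynomial (Fin 5) ℂ →ₐ[ℂ] MV 2).range := by
  obtain ⟨P, hP⟩ := h
  replace hP : aeval ![g1, g2, g3, g4, g5] P = g3 * f := hP
  have hd : X 2 ∣ P := by
    refine dvd_of_eval 2 P (X 1 * X 4) (mul_ne_zero (X_ne_zero _) (X_ne_zero _)) fun z hz => ?_
    simp only [map_mul, eval_X, mul_ne_zero_iff] at hz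
    obtain ⟨h1, h4⟩ := hz
    have := congrArg (eval (pt 0 (z 3 * z 4 / z 1) (- z 1 / z 4) 0 (z 4) 0 0 (z 0 / z 4))) hP
    rw [eval_G, map_mul] at this
    have e : eval (pt 0 (z 3 * z 4 / z 1) (- z 1 / z 4) 0 (z 4) 0 0 (z 0 / z 4)) g3 = 0 := by
      simp [g3, xv, pt]
    replace this := this.trans (by rw [e, zero_mul] : _ = (0 : ℂ))
    refine Eq.trans ?_ this
    congr 2
    funext i
    fin_cases i <;> simp [Function.update] <;> field_simp
  obtain ⟨Q, rfl⟩ := hd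
  refine ⟨Q, ?_⟩
  rw [map_mul, aeval_X] at hP
  exact mul_left_cancel₀ (X_ne_zero _ : g3 ≠ 0) hP

lemma descend_p (f : MV 2)
    (h : g5 * f ∈ (aeval ![g1, g2, g3, g4, g5] : MvPolynomial (Fin 5) ℂ →ₐ[ℂ] MV 2).range) :
    f ∈ (aeval ![g1, g2, g3, g4, g5] : MvPolynomial (Fin 5) ℂ →ₐ[ℂ] MV 2).range := by
  obtain ⟨P, hP⟩ := h
  replace hP : aeval ![g1, g2, g3, g4, g5] P = g5 * f := hP
  have hd : X 4 ∣ P := by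
    refine dvd_of_eval 4 P (X 1 * X 2) (mul_ne_zero (X_ne_zero _) (X_ne_zero _)) fun z hz => ?_
    simp only [map_mul, eval_X, mul_ne_zero_iff] at hz
    obtain ⟨h1, h4⟩ := hz
    have := congrArg (eval (pt (z 2) 0 0 (z 3 / z 2) 0 (- z 0 * z 2 / z 1) (z 1 / z 2) 0)) hP
    rw [eval_G, map_mul] at this
    have e : eval (pt (z 2) 0 0 (z 3 / z 2) 0 (- z 0 * z 2 / z 1) (z 1 / z 2) 0) g5 = 0 := by
      simp [g5, yv, pt]
    replace this := this.trans (by rw [e, zero_mul] : _ = (0 : ℂ))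
    refine Eq.trans ?_ this
    congr 2
    funext i
    fin_cases i <;> simp [Function.update] <;> field_simp
  obtain ⟨Q, rfl⟩ := hd
  refine ⟨Q, ?_⟩
  rw [map_mul, aeval_X] at hP
  exact mul_left_cancel₀ (X_ne_zero _ : g5 ≠ 0) hP

lemma descend (f : MV 2) (N : ℕ)
    (h : (g3 * g5) ^ N * f ∈
      (aeval ![g1, g2, g3, g4, g5] : MvPolynomial (Fin 5) ℂ →ₐ[ℂ] MV 2).range) :
    f ∈ (aeval ![g1, g2, g3, g4, g5] : MvPolynomial (Fin 5) ℂ →ₐ[ℂ] MV 2).range := by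
  induction N with
  | zero => simpa using h
  | succ n ih =>
    apply ih
    apply descend_p
    apply descend_a
    convert h using 1
    ring

lemma le_range : TA 2 ≤ (aeval ![g1, g2, g3, g4, g5] : MvPolynomial (Fin 5) ℂ →ₐ[ℂ] MV 2).range := by
  intro f hf
  obtain ⟨N, P, hP⟩ := homogenize f
  apply descend f (N + 1)
  refine ⟨X 2 * X 4 * P, ?_⟩
  change aeval ![g1, g2, g3, g4, g5] (X 2 * X 4 * P) = _
  have e2 : aeval ![g1, g2, g3, g4, g5] (X 2 * X 4 * P) =
      g3 * g5 * aeval ![g1, g2, g3, g4, g5] P := by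
    simp
  rw [e2]
  apply MvPolynomial.funext
  intro m
  rw [pt_eta m]
  generalize m (Sum.inl (0, 0)) = a
  generalize m (Sum.inl (0, 1)) = b
  generalize m (Sum.inl (1, 0)) = c
  generalize m (Sum.inl (1, 1)) = d
  generalize m (Sum.inr (0, 0)) = p
  generalize m (Sum.inr (0, 1)) = q
  generalize m (Sum.inr (1, 0)) = r
  generalize m (Sum.inr (1, 1)) = s
  have e3 : eval (pt a b c d p q r s) g3 = a := by simp [g3, xv, pt]
  have e5 : eval (pt a b c d p q r s) g5 = p := by simp [g5, yv, pt]
  simp only [map_mul, map_pow, e3, e5, eval_G]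
  by_cases ha : a = 0
  · simp [ha]
  by_cases hp : p = 0
  · simp [hp]
  rw [← hP _ (by simpa using ha) (by simpa using hp), invariant_eval hf a b c d p q r s ha hp]
  simp
  ring

lemma alg_indep : AlgebraicIndependent ℂ ![g1, g2, g3, g4, g5] := by
  rw [algebraicIndependent_iff]
  intro P hP
  have h : X 2 * X 4 * P = 0 := by
    apply MvPolynomial.funext
    intro z
    simp only [map_mul, eval_X, map_zero]
    by_cases h2 : z 2 = 0
    · simp [h2]
    by_cases h4 : z 4 = 0
    · simp [h4]
    have := congrArg (eval (pt (z 2) 0 0 (z 3 / z 2) (z 4) 0 (z 1 / z 2) (z 0 / z 4))) hP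
    rw [eval_G, map_zero] at this
    have e : z = ![z 4 * (z 0 / z 4) - 0 * (z 1 / z 2), z 2 * (z 1 / z 2) - z 4 * 0, z 2,
        z 2 * (z 3 / z 2) - 0 * 0, z 4] := by
      funext i
      fin_cases i <;> simp <;> field_simp
    rw [← e] at this
    rw [this, mul_zero]
  exact (mul_eq_zero.1 h).resolve_left (mul_ne_zero (X_ne_zero _) (X_ne_zero _))

/-- The five polynomials `g₁, ..., g₅` are algebraically independent over `ℂ`;
consequently `TA(2)` is isomorphic as a `ℂ`-algebra to a polynomial algebra in five
indeterminates. -/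
theorem TA2_algebraically_independent :
    AlgebraicIndependent ℂ ![g1, g2, g3, g4, g5] ∧
    Nonempty ((TA 2) ≃ₐ[ℂ] MvPolynomial (Fin 5) ℂ) := by
  refine ⟨alg_indep, ⟨?_⟩⟩
  exact (Subalgebra.equivOfEq _ _ (le_antisymm le_range range_le)).trans
    (AlgEquiv.ofInjective _ alg_indep).symm
end
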